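/- Let P be a partial profile over a finite set A of alternatives, B a partial agenda over A, and p ∈ A. There exist a completion P* of P and a completion L of B such that p is not a (Succ_L(p) ∪ {p})-majority winner in P* if and only if there exists a completion P* of P in which p is not an (A ∖ Prec_B(p))-majority winner. -/

import Mathlib

open scoped Classical

/-- The number of voters in profile `prof` who strictly prefer `b` to `c`. -/
noncomputable def prefCount {α : Type*} {n : ℕ} (prof : Fin n → α → α → Prop) (b c : α) : ℕ :=
  (Finset.univ.filter fun i => prof i b c).card

/-- Alternative `b` beats alternative `c`: more than `n/2` voters prefer `b` to `c`. -/
def Beats {α : Type*} {n : ℕ} (prof : Fin n → α → α → Prop) (b c : α) : Prop :=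
  2 * prefCount prof b c > n

/-- `a` is an `S`-majority winner: more than `n/2` voters prefer `a`
to every alternative of `S \ {a}`. -/
def IsMajWinner {α : Type*} {n : ℕ} (prof : Fin n → α → α → Prop) (S : Finset α) (a : α) :
    Prop :=
  2 * (Finset.univ.filter fun i => ∀ c ∈ S, c ≠ a → prof i a c).card > n

/-- The successive winner for the agenda given as a list: the first alternative of the
agenda that is a majority winner with respect to itself and all later alternatives. -/
noncomputable def succWinner {α : Type*} [DecidableEq α] {n : ℕ}
    (prof : Fin n → α → α → Prop) : List α → Option α
  | [] => none
  | a :: rest =>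
    if IsMajWinner prof ((a :: rest).toFinset) a then some a
    else succWinner prof rest

/-- The amendment winner for the agenda given as a list: the current round winner is
challenged by the next alternative on the agenda, which takes over if it beats it. -/
noncomputable def amendWinner {α : Type*} {n : ℕ}
    (prof : Fin n → α → α → Prop) : List α → Option α
  | [] => none
  | a :: rest => some (rest.foldl (fun win c => if Beats prof c win then c else win) a)

/-- `comp` is a completion of the partial profile `prof`: every voter's strict partial
order is replaced by a linear (strict total) order extending it. -/
def Completes {α : Type*} {n : ℕ} (comp prof : Fin n → α → α → Prop) : Prop :=
  ∀ i, IsStrictTotalOrder α (comp i) ∧ ∀ x y, prof i x y → comp i x y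

/-- `L` is a completion of the partial agenda `B`: `L` is an agenda (a linear order on all
alternatives, given as a duplicate-free exhaustive list) extending `B`. -/
def AgendaCompletes {α : Type*} [DecidableEq α] (L : List α) (B : α → α → Prop) : Prop :=
  L.Nodup ∧ (∀ a : α, a ∈ L) ∧ ∀ x y, B x y → L.idxOf x < L.idxOf y

/-- `Prec L p`: the set of alternatives ordered before `p` by the agenda `L`. -/
noncomputable def PrecL {α : Type*} [Fintype α] [DecidableEq α] (L : List α) (p : α) :
    Finset α :=
  Finset.univ.filter fun c => L.idxOf c < L.idxOf p

/-- `Succ L p`: the set of alternatives ordered after `p` by the agenda `L`. -/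
noncomputable def SuccL {α : Type*} [Fintype α] [DecidableEq α] (L : List α) (p : α) :
    Finset α :=
  Finset.univ.filter fun c => L.idxOf p < L.idxOf c

/-- `Prec B p` for a partial agenda `B` (a strict partial order on the alternatives):
the set of alternatives ordered before `p` by `B`. -/
noncomputable def PrecB {α : Type*} [Fintype α] (B : α → α → Prop) (p : α) : Finset α :=
  Finset.univ.filter fun c => B c p

/-- `Succ B p` for a partial agenda `B`: the set of alternatives ordered after `p`. -/
noncomputable def SuccB {α : Type*} [Fintype α] (B : α → α → Prop) (p : α) : Finset α :=
  Finset.univ.filter fun c => B p c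

/-- Being a majority winner is antitone in the set of competing alternatives. -/
lemma IsMajWinner.anti {α : Type*} {n : ℕ} {prof : Fin n → α → α → Prop} {S T : Finset α}
    {a : α} (hST : S ⊆ T) (h : IsMajWinner prof T a) : IsMajWinner prof S a := by
  unfold IsMajWinner at h ⊢
  refine lt_of_lt_of_le h (Nat.mul_le_mul_left 2 (Finset.card_le_card fun i hi => ?_))
  simp only [Finset.mem_filter, Finset.mem_univ, true_and] at hi ⊢
  exact fun c hc => hi c (hST hc)

/-- Every partial agenda over a finite set of alternatives has a completion. -/
lemma exists_agendaCompletes {α : Type*} [Fintype α] [DecidableEq α] (B : α → α → Prop)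
    (hB : IsStrictOrder α B) : ∃ L : List α, AgendaCompletes L B := by
  let : PartialOrder α := partialOrderOfSO B
  let : Fintype (LinearExtension α) := ‹Fintype α›
  let e : Fin (Fintype.card α) ≃o LinearExtension α :=
    Fintype.orderIsoFinOfCardEq (LinearExtension α) rfl
  let f : Fin (Fintype.card α) → α := fun i => e i
  have hf : Function.Injective f := e.injective
  have hnodup : (List.ofFn f).Nodup := List.nodup_ofFn.2 hf
  have hidx : ∀ a : α, (List.ofFn f).idxOf a = e.symm a := fun a => by
    have h := hnodup.idxOf_getElem (e.symm a) (by simp)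
    rw [List.getElem_ofFn] at h
    exact (congrArg (List.ofFn f).idxOf (e.apply_symm_apply a).symm).trans h
  refine ⟨List.ofFn f, hnodup, fun a => (List.mem_ofFn' f a).2 ⟨e.symm a, e.apply_symm_apply a⟩,
    fun x y hxy => ?_⟩
  rw [hidx, hidx]
  have hlt : x < y := hxy
  have hle : toLinearExtension x ≤ toLinearExtension y := toLinearExtension.monotone hlt.le
  exact e.symm.lt_iff_lt.2 (lt_of_le_of_ne hle hlt.ne)

/-- Every partial agenda has a completion in which `p` comes before every alternative that is not
forced to precede it. -/
lemma exists_agendaCompletes_compl_precB_subset {α : Type*} [Fintype α] [DecidableEq α]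
    (B : α → α → Prop) (hB : IsStrictOrder α B) (p : α) :
    ∃ L : List α, AgendaCompletes L B ∧ Finset.univ \ PrecB B p ⊆ insert p (SuccL L p) := by
  have htrans : ∀ x y z, B x y → B y z → B x z := fun _ _ _ => hB.trans _ _ _
  have hirrefl : ∀ x, ¬ B x x := hB.irrefl
  let C : α → α → Prop := fun x y => B x y ∨ ((x = p ∨ B x p) ∧ ¬ (y = p ∨ B y p))
  have hC : IsStrictOrder α C :=
    { irrefl := fun x hx => by grind
      trans := fun x y z hxy hyz => by grind }
  obtain ⟨L, hnodup, hmem, hL⟩ := exists_agendaCompletes C hC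
  refine ⟨L, ⟨hnodup, hmem, fun x y hxy => hL x y (Or.inl hxy)⟩, fun c hc => ?_⟩
  simp only [PrecB, SuccL, Finset.mem_sdiff, Finset.mem_univ, Finset.mem_filter, true_and,
    Finset.mem_insert] at hc ⊢
  by_cases hcp : c = p
  · exact Or.inl hcp
  · exact Or.inr (hL p c (Or.inr ⟨Or.inl rfl, by tauto⟩))

/-- In a completion of a partial agenda, no alternative forced before `p` comes after `p`. -/
lemma AgendaCompletes.insert_succL_subset {α : Type*} [Fintype α] [DecidableEq α] {L : List α}
    {B : α → α → Prop} (hL : AgendaCompletes L B) (p : α) :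
    insert p (SuccL L p) ⊆ Finset.univ \ PrecB B p := by
  intro c hc
  simp only [PrecB, SuccL, Finset.mem_sdiff, Finset.mem_univ, Finset.mem_filter, true_and,
    Finset.mem_insert] at hc ⊢
  intro hcp
  have hlt := hL.2.2 c p hcp
  rcases hc with rfl | hc
  · exact lt_irrefl _ hlt
  · exact lt_asymm hlt hc

/-- There are completions `comp` of the partial profile and `L` of the partial agenda
such that `p` is not a `(Succ_L(p) ∪ {p})`-majority winner iff there is a completion
`comp` of the profile in which `p` is not an `(A ∖ Prec_B(p))`-majority winner. -/
theorem stmt14 {α : Type*} [Fintype α] [DecidableEq α] {n : ℕ}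
    (prof : Fin n → α → α → Prop) (hpo : ∀ i, IsStrictOrder α (prof i))
    (B : α → α → Prop) (hB : IsStrictOrder α B) (p : α) :
    (∃ (comp : Fin n → α → α → Prop) (L : List α),
      Completes comp prof ∧ AgendaCompletes L B ∧
      ¬ IsMajWinner comp (insert p (SuccL L p)) p) ↔
    (∃ comp : Fin n → α → α → Prop, Completes comp prof ∧
      ¬ IsMajWinner comp (Finset.univ \ PrecB B p) p) := by
  constructor
  · rintro ⟨comp, L, hcomp, hL, hp⟩
    exact ⟨comp, hcomp, fun h => hp (h.anti (hL.insert_succL_subset p))⟩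
  · rintro ⟨comp, hcomp, hp⟩
    obtain ⟨L, hL, hsub⟩ := exists_agendaCompletes_compl_precB_subset B hB p
    exact ⟨comp, L, hcomp, hL, fun h => hp (h.anti hsub)⟩
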